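/- Let α ∈ (0, π/4). Every time optimal trajectory γ of (Σ)_S on [a,b] starting at the north pole (0,0,1) is regular bang-bang: its control u satisfies |u(t)| = 1 for almost every t ∈ [a,b], and the set of switching times of u is finite. -/

import Mathlib

open Real MeasureTheory intervalIntegral

/-- The drift vector field on the sphere: `F_S(y) = cos α·(−y₂, y₁, 0)`. -/
noncomputable def FS (α : ℝ) (y : Fin 3 → ℝ) : Fin 3 → ℝ :=
  ![Real.cos α * (-(y 1)), Real.cos α * y 0, 0]

/-- The controlled vector field on the sphere: `G_S(y) = sin α·(0, −y₃, y₂)`. -/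
noncomputable def GS (α : ℝ) (y : Fin 3 → ℝ) : Fin 3 → ℝ :=
  ![0, Real.sin α * (-(y 2)), Real.sin α * y 1]

/-- An admissible pair for `(Σ)_S` on `[a,b]`: a measurable control `u : [a,b] → [-1,1]`
together with an absolutely continuous curve `γ : [a,b] → S²` solving
`γ' = F_S(γ) + u·G_S(γ)` a.e. (expressed in integral form, componentwise). -/
structure AdmissiblePairS (α a b : ℝ) (γ : ℝ → Fin 3 → ℝ) (u : ℝ → ℝ) : Prop where
  hab : a ≤ b
  humeas : Measurable u
  hubound : ∀ t ∈ Set.Icc a b, |u t| ≤ 1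
  hsph : ∀ t ∈ Set.Icc a b, (γ t 0) ^ 2 + (γ t 1) ^ 2 + (γ t 2) ^ 2 = 1
  hcont : ContinuousOn γ (Set.Icc a b)
  hode : ∀ t ∈ Set.Icc a b, ∀ i,
    γ t i = γ a i + ∫ s in a..t, (FS α (γ s) i + u s * GS α (γ s) i)

/-- Time optimality for `(Σ)_S`. -/
def TimeOptimalS (α a b : ℝ) (γ : ℝ → Fin 3 → ℝ) (u : ℝ → ℝ) : Prop :=
  AdmissiblePairS α a b γ u ∧
  ∀ a' b' γ' u', AdmissiblePairS α a' b' γ' u' →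
    γ' a' = γ a → γ' b' = γ b → b - a ≤ b' - a'

/-- `t` is a switching time of the control `u : [a,b] → [-1,1]`. -/
def IsSwitching (a b : ℝ) (u : ℝ → ℝ) (t : ℝ) : Prop :=
  t ∈ Set.Icc a b ∧ ∀ ε > 0, ¬ ∃ c : ℝ, (c = 1 ∨ c = -1) ∧
    ∀ᵐ s ∂(volume.restrict (Set.Ioo (t - ε) (t + ε) ∩ Set.Icc a b)), u s = c

/-!
Writing `(Σ)_S` as `γ' = ω(u) × γ` with `ω(u) = (u sin α, 0, cos α)`, optimality says that no
control makes the slowed-down system `y' = (1 - s) ω(v) × y` reach `γ b` for `s > 0`. Hence the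
linearised end-point map does not send the admissible variations of `u` onto a neighbourhood of
the origin, and a separating functional, transported backwards, is a covector `λ` solving the same
equation as `γ`. So does the momentum `M = γ × λ`, and the separation inequality becomes the
maximum principle `u · sin α · M₀ = |sin α · M₀|` almost everywhere.

The control is therefore bang-bang, and switches only at zeros of `M₀`, once these are shown to be
isolated. At a tangential zero `M` is parallel to the third axis, so the conserved Hamiltonian
`cos α · M₂ + |sin α · M₀|` equals `± cos α ‖M‖`; but `M` starts orthogonal to `γ a`, and for the
north pole this bounds the Hamiltonian by `sin α ‖M‖`, which is smaller.
-/

open Filter Topology Set Matrix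

section Multiplier

variable {F : Type*} [NormedAddCommGroup F] [NormedSpace ℝ F] [FiniteDimensional ℝ F]

lemma exists_dual_le_of_convex_of_notMem_interior {C : Set F} (hC : Convex ℝ C) {x : F}
    (hx : x ∈ C) (hxC : x ∉ interior C) : ∃ p : StrongDual ℝ F, p ≠ 0 ∧ ∀ y ∈ C, p y ≤ p x := by
  by_cases hne : (interior C).Nonempty
  · exact geometric_hahn_banach_of_nonempty_interior_point hC hxC hne
  · rw [hC.interior_nonempty_iff_affineSpan_eq_top,
      AffineSubspace.affineSpan_eq_top_iff_vectorSpan_eq_top_of_nonempty ℝ _ _ ⟨x, hx⟩] at hne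
    obtain ⟨p, hp, hker⟩ := Submodule.exists_le_ker_of_lt_top _ (lt_top_iff_ne_top.mpr hne)
    refine ⟨p.toContinuousLinearMap, by simpa using hp, fun y hy => le_of_eq ?_⟩
    have : p (y - x) = 0 := hker (vsub_mem_vectorSpan ℝ hy hx)
    simpa [sub_eq_zero] using this

lemma exists_affineMap_rightInverse {X : Type*} [AddCommGroup X] [Module ℝ X] {C : Set X}
    (hC : Convex ℝ C) (L : X →ₗ[ℝ] F) {y : F} (hy : L '' C ∈ 𝓝 y) :
    ∃ ξ : F →ᵃ[ℝ] X, (∀ z, L (ξ z) = z) ∧ ∀ᶠ z in 𝓝 y, ξ z ∈ C := by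
  obtain ⟨b, hyb, hbC⟩ := exists_mem_interior_convexHull_affineBasis hy
  choose x hxC hxb using fun i => hbC (subset_convexHull ℝ _ (mem_range_self i))
  refine ⟨(Fintype.linearCombination ℝ x).toAffineMap.comp b.coords, fun z => ?_, ?_⟩
  · simp [Fintype.linearCombination_apply, hxb]
  · filter_upwards [isOpen_interior.mem_nhds hyb] with z hz
    rw [b.interior_convexHull] at hz
    exact hC.sum_mem (fun i _ => (hz i).le) (b.sum_coord_apply_eq_one z) fun i _ => hxC i

lemma exists_hasDerivAt_zero_eventually_eq {G : Type*} [NormedAddCommGroup G] [NormedSpace ℝ G]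
    [CompleteSpace G] {Ψ : ℝ × G → G}
    (hΨ : HasStrictFDerivAt Ψ (ContinuousLinearMap.snd ℝ ℝ G) (0, 0)) :
    ∃ y : ℝ → G, y 0 = 0 ∧ HasDerivAt y 0 0 ∧ ∀ᶠ k in 𝓝 0, Ψ (k, y k) = Ψ (0, 0) := by
  have hinv : (ContinuousLinearMap.snd ℝ ℝ G ∘L .inr ℝ ℝ G).IsInvertible := by
    simpa using ContinuousLinearMap.isInvertible_equiv (f := ContinuousLinearEquiv.refl ℝ G)
  have hψ := (hΨ.hasStrictFDerivAt_implicitFunctionOfProdDomain hinv).hasFDerivAt.hasDerivAt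
  exact ⟨_, (hΨ.eventually_apply_eq_iff_implicitFunctionOfProdDomain hinv).self_of_nhds.mp rfl,
    by simpa using hψ, hΨ.eventually_apply_implicitFunctionOfProdDomain hinv⟩

variable {X : Type*} [NormedAddCommGroup X] [NormedSpace ℝ X]

/-- Since `s = k²` is negligible against the variation `k • d`, the implicit function theorem
applies to `(k, y) ↦ Φ (x₀ + k • d + S y, k²)`. -/
lemma exists_tendsto_zero_eventually_eq {G : Type*} [NormedAddCommGroup G] [NormedSpace ℝ G]
    [CompleteSpace G] {Φ : X × ℝ → G} {Φ' : X × ℝ →L[ℝ] G} {x₀ : X}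
    (hΦ : HasStrictFDerivAt Φ Φ' (x₀, 0)) {S : G →L[ℝ] X} (hS : ∀ z, Φ' (S z, 0) = z) {d : X}
    (hd : Φ' (d, 0) = 0) :
    ∃ z : ℝ → G, Tendsto z (𝓝[>] 0) (𝓝 0) ∧
      ∀ᶠ k in 𝓝[>] 0, Φ (x₀ + k • (S (z k) + d), k ^ 2) = Φ (x₀, 0) := by
  have hcurve : HasStrictFDerivAt (fun q : ℝ × G => (x₀ + (q.1 • d + S q.2), q.1 ^ 2))
      (((ContinuousLinearMap.fst ℝ ℝ G).smulRight d + S ∘L .snd ℝ ℝ G).prod 0) (0, 0) := by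
    refine HasStrictFDerivAt.prodMk (.const_add _ (.add ?_ ?_)) ?_
    · exact ((ContinuousLinearMap.fst ℝ ℝ G).smulRight d).hasStrictFDerivAt
    · exact (S ∘L .snd ℝ ℝ G).hasStrictFDerivAt
    · simpa using (hasStrictFDerivAt_fst (𝕜 := ℝ) (E := ℝ) (F := G) (p := (0, 0))).pow 2
  have hΨ : HasStrictFDerivAt (fun q : ℝ × G => Φ (x₀ + (q.1 • d + S q.2), q.1 ^ 2))
      (ContinuousLinearMap.snd ℝ ℝ G) (0, 0) :=
    (HasStrictFDerivAt.comp (0, 0) (by simpa using hΦ) hcurve).congr_fderiv <| by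
      ext q <;> simp [hd, hS]
  obtain ⟨y, hy0, hy, hΨy⟩ := exists_hasDerivAt_zero_eventually_eq hΨ
  refine ⟨fun k => k⁻¹ • y k, by simpa [hy0] using hy.tendsto_slope_zero_right, ?_⟩
  filter_upwards [nhdsWithin_le_nhds hΨy, self_mem_nhdsWithin] with k hk hk0
  have hcurve_eq : k • (S (k⁻¹ • y k) + d) = k • d + S (y k) := by
    rw [map_smul, smul_add, smul_inv_smul₀ (ne_of_gt hk0), add_comm]
  rw [hcurve_eq]
  simpa using hk

lemma eventually_exists_eq_of_mem_nhds_image {K : Set X} (hK : Convex ℝ K) {x₀ : X}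
    (hx₀ : x₀ ∈ K) {Φ : X × ℝ → F} {Φ' : X × ℝ →L[ℝ] F} (hΦ : HasStrictFDerivAt Φ Φ' (x₀, 0))
    (h0 : (fun x => Φ' (x - x₀, 0)) '' K ∈ 𝓝 0) :
    ∀ᶠ s in 𝓝[>] (0 : ℝ), ∃ x ∈ K, Φ (x, s) = Φ (x₀, 0) := by
  obtain ⟨ξ, hLξ, hξK⟩ := exists_affineMap_rightInverse (hK.translate (-x₀))
    (Φ' ∘L ContinuousLinearMap.inl ℝ X ℝ).toLinearMap (y := 0) (by
      simpa [image_image, ← sub_eq_neg_add] using h0)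
  let S : F →L[ℝ] X := ξ.linear.toContinuousLinearMap
  have hξS (z : F) : ξ z = S z + ξ 0 := congrFun ξ.decomp z
  have hΦξ : Φ' (ξ 0, 0) = 0 := hLξ 0
  have hΦS (z : F) : Φ' (S z, 0) = z := by
    have hz : Φ' (S z + ξ 0, 0) = z := hξS z ▸ hLξ z
    have hadd : ((S z + ξ 0, 0) : X × ℝ) = (S z, 0) + (ξ 0, 0) := by simp
    rwa [hadd, map_add, hΦξ, add_zero] at hz
  obtain ⟨z, hz, hΦz⟩ := exists_tendsto_zero_eventually_eq hΦ hΦS hΦξ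
  have hk : ∀ᶠ k in 𝓝[>] (0 : ℝ), ∃ x ∈ K, Φ (x, k ^ 2) = Φ (x₀, 0) := by
    filter_upwards [hΦz, hz.eventually hξK, Ioo_mem_nhdsGT one_pos] with k hk hξk hk01
    refine ⟨_, ?_, hk⟩
    rw [← hξS]
    exact hK.add_smul_mem hx₀ (by simpa using hξk) ⟨hk01.1.le, hk01.2.le⟩
  have hsqrt : Tendsto sqrt (𝓝[>] 0) (𝓝[>] 0) :=
    tendsto_nhdsWithin_iff.2
      ⟨by simpa using (continuous_sqrt.tendsto 0).mono_left nhdsWithin_le_nhds,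
        by filter_upwards [self_mem_nhdsWithin] with s hs using sqrt_pos.2 hs⟩
  filter_upwards [hsqrt.eventually hk, self_mem_nhdsWithin] with s hs hs0
  rwa [sq_sqrt (le_of_lt hs0)] at hs

lemma exists_multiplier {K : Set X} (hK : Convex ℝ K) {x₀ : X} (hx₀ : x₀ ∈ K) {Φ : X × ℝ → F}
    {Φ' : X × ℝ →L[ℝ] F} (hΦ : HasStrictFDerivAt Φ Φ' (x₀, 0))
    (hopt : ∀ᶠ s in 𝓝[>] (0 : ℝ), ∀ x ∈ K, Φ (x, s) ≠ Φ (x₀, 0)) :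
    ∃ p : StrongDual ℝ F, p ≠ 0 ∧ ∀ x ∈ K, p (Φ' (x - x₀, 0)) ≤ 0 := by
  let C : Set F := (fun x => Φ' (x - x₀, 0)) '' K
  have hC : Convex ℝ C := by
    have := (hK.translate (-x₀)).linear_image (Φ' ∘L ContinuousLinearMap.inl ℝ X ℝ).toLinearMap
    simpa [image_image, ← sub_eq_neg_add] using this
  have h0C : (0 : F) ∉ interior C := fun h => by
    obtain ⟨s, hs, x, hx, hxs⟩ := (hopt.and (eventually_exists_eq_of_mem_nhds_image hK hx₀ hΦ
      (mem_interior_iff_mem_nhds.mp h))).exists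
    exact hs x hx hxs
  have hx₀C : (0 : F) ∈ C := ⟨x₀, hx₀, by simp only [sub_self]; exact map_zero Φ'⟩
  obtain ⟨p, hp, hpC⟩ := exists_dual_le_of_convex_of_notMem_interior hC hx₀C h0C
  exact ⟨p, hp, fun x hx => (hpC _ ⟨x, hx, rfl⟩).trans_eq (map_zero p)⟩

end Multiplier

/-- `f` is absolutely continuous on the interval with endpoints `a` and `b`, and `f'` is its
derivative at almost every point there: the sense in which a trajectory of a control system solves
its differential equation. -/
structure HasAEDerivOn (f f' : ℝ → ℝ) (a b : ℝ) : Prop where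
  absolutelyContinuousOnInterval : AbsolutelyContinuousOnInterval f a b
  ae_hasDerivAt : ∀ᵐ t, t ∈ uIcc a b → HasDerivAt f (f' t) t

lemma ae_mem_uIcc_mem_nhds (a b : ℝ) : ∀ᵐ t, t ∈ uIcc a b → uIcc a b ∈ 𝓝 t := by
  filter_upwards [Measure.ae_ne volume (min a b), Measure.ae_ne volume (max a b)]
    with t hmin hmax ht
  exact Icc_mem_nhds (ht.1.lt_of_ne hmin.symm) (ht.2.lt_of_ne hmax)

lemma absolutelyContinuousOnInterval_congr {f g : ℝ → ℝ} {a b : ℝ}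
    (hf : AbsolutelyContinuousOnInterval f a b) (h : EqOn f g (uIcc a b)) :
    AbsolutelyContinuousOnInterval g a b := by
  refine Tendsto.congr' ?_ hf
  filter_upwards [mem_inf_of_right (mem_principal_self _)] with E hE
  exact Finset.sum_congr rfl fun i hi => by rw [h (hE.1 i hi).1, h (hE.1 i hi).2]

lemma absolutelyContinuousOnInterval_abs {f : ℝ → ℝ} {a b : ℝ}
    (hf : AbsolutelyContinuousOnInterval f a b) :
    AbsolutelyContinuousOnInterval (fun t => |f t|) a b :=
  squeeze_zero (fun _ => Finset.sum_nonneg fun _ _ => dist_nonneg)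
    (fun _ => Finset.sum_le_sum fun _ _ => abs_abs_sub_abs_le_abs_sub _ _) hf

/-- A zero of `f` is a minimum of `|f|`. -/
lemma hasDerivAt_abs_of_eq_zero {f : ℝ → ℝ} {f' t : ℝ} (hf : HasDerivAt f f' t) (h0 : f t = 0)
    (hd : DifferentiableAt ℝ (fun s => |f s|) t) : HasDerivAt (fun s => |f s|) 0 t ∧ f' = 0 := by
  have hmin : IsLocalMin (fun s => |f s|) t := .of_forall fun s => by simp [h0]
  have habs : HasDerivAt (fun s => |f s|) 0 t := hmin.deriv_eq_zero ▸ hd.hasDerivAt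
  refine ⟨habs, hf.unique ?_⟩
  rw [hasDerivAt_iff_isLittleO] at habs ⊢
  simpa [h0] using habs

namespace HasAEDerivOn

variable {f f' g g' : ℝ → ℝ} {a b : ℝ}

lemma congr_ae (hf : HasAEDerivOn f f' a b) (h : ∀ᵐ t, t ∈ uIcc a b → f' t = g' t) :
    HasAEDerivOn f g' a b :=
  ⟨hf.1, by filter_upwards [hf.2, h] with t hft ht hmem using ht hmem ▸ hft hmem⟩

lemma const (c : ℝ) : HasAEDerivOn (fun _ => c) 0 a b :=
  ⟨(LipschitzWith.const c).lipschitzOnWith.absolutelyContinuousOnInterval,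
    .of_forall fun t _ => hasDerivAt_const t c⟩

lemma add (hf : HasAEDerivOn f f' a b) (hg : HasAEDerivOn g g' a b) :
    HasAEDerivOn (fun t => f t + g t) (fun t => f' t + g' t) a b :=
  ⟨hf.1.add hg.1, by filter_upwards [hf.2, hg.2] with t hft hgt ht using (hft ht).add (hgt ht)⟩

lemma sub (hf : HasAEDerivOn f f' a b) (hg : HasAEDerivOn g g' a b) :
    HasAEDerivOn (fun t => f t - g t) (fun t => f' t - g' t) a b :=
  ⟨hf.1.sub hg.1, by filter_upwards [hf.2, hg.2] with t hft hgt ht using (hft ht).sub (hgt ht)⟩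

lemma mul (hf : HasAEDerivOn f f' a b) (hg : HasAEDerivOn g g' a b) :
    HasAEDerivOn (fun t => f t * g t) (fun t => f' t * g t + f t * g' t) a b :=
  ⟨hf.1.mul hg.1, by filter_upwards [hf.2, hg.2] with t hft hgt ht using (hft ht).mul (hgt ht)⟩

lemma const_mul (c : ℝ) (hf : HasAEDerivOn f f' a b) :
    HasAEDerivOn (fun t => c * f t) (fun t => c * f' t) a b :=
  ⟨hf.1.const_mul c, by filter_upwards [hf.2] with t hft ht using (hft ht).const_mul c⟩

lemma pow_succ (hf : HasAEDerivOn f f' a b) (n : ℕ) :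
    HasAEDerivOn (fun t => f t ^ (n + 1)) (fun t => (n + 1) * (f t ^ n * f' t)) a b := by
  refine ⟨?_, ?_⟩
  · induction n with
    | zero => simpa using hf.1
    | succ n ih => simpa only [_root_.pow_succ _ (n + 1)] using ih.fun_mul hf.1
  · filter_upwards [hf.2] with t hft ht
    simpa [mul_assoc] using (hft ht).fun_pow (n + 1)

lemma abs {σ : ℝ → ℝ} (hf : HasAEDerivOn f f' a b)
    (hσ : ∀ᵐ t, t ∈ uIcc a b → σ t * f t = |f t|) :
    HasAEDerivOn (fun t => |f t|) (fun t => σ t * f' t) a b := by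
  have hac := absolutelyContinuousOnInterval_abs hf.1
  refine ⟨hac, ?_⟩
  filter_upwards [hf.2, hσ, hac.ae_differentiableAt] with t hft hσt hd ht
  rcases eq_or_ne (f t) 0 with h0 | h0
  · obtain ⟨habs, hf0⟩ := hasDerivAt_abs_of_eq_zero (hft ht) h0 (hd ht)
    rwa [hf0, mul_zero]
  · have hσ_eq : σ t = SignType.sign (f t) :=
      mul_right_cancel₀ h0 ((hσt ht).trans (sign_mul_self (f t)).symm)
    exact hσ_eq ▸ (hasDerivAt_abs h0).comp t (hft ht)

lemma of_eqOn_integral (hg : IntervalIntegrable g volume a b)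
    (hf : ∀ t ∈ uIcc a b, f t = f a + ∫ s in a..t, g s) : HasAEDerivOn f g a b := by
  have hac : AbsolutelyContinuousOnInterval (fun t => f a + ∫ s in a..t, g s) a b :=
    (const (f a)).1.fun_add (hg.absolutelyContinuousOnInterval_intervalIntegral left_mem_uIcc)
  refine ⟨absolutelyContinuousOnInterval_congr hac fun t ht => (hf t ht).symm, ?_⟩
  filter_upwards [hg.ae_hasDerivAt_integral, ae_mem_uIcc_mem_nhds a b] with t hd hnhds ht
  refine ((hd ht a left_mem_uIcc).const_add (f a)).congr_of_eventuallyEq ?_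
  filter_upwards [hnhds ht] using hf

lemma intervalIntegrable (hf : HasAEDerivOn f f' a b) : IntervalIntegrable f' volume a b := by
  refine hf.1.intervalIntegrable_deriv.congr_ae ((ae_restrict_iff' measurableSet_uIoc).2 ?_)
  filter_upwards [hf.2] with t ht hmem using (ht (uIoc_subset_uIcc hmem)).deriv

lemma integral_eq_sub (hf : HasAEDerivOn f f' a b) : ∫ t in a..b, f' t = f b - f a := by
  rw [← hf.1.integral_deriv_eq_sub]
  refine intervalIntegral.integral_congr_ae ?_
  filter_upwards [hf.2] with t ht hmem using (ht (uIoc_subset_uIcc hmem)).deriv.symm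

lemma eq_left_of_ae_eq_zero (hf : HasAEDerivOn f f' a b)
    (hf' : ∀ᵐ t, t ∈ uIcc a b → f' t = 0) {t : ℝ} (ht : t ∈ uIcc a b) : f t = f a := by
  obtain ⟨c, hc⟩ := hf.1.const_of_ae_hasDerivAt_zero (hf.congr_ae hf').2
  rw [hc t ht, hc a left_mem_uIcc]

lemma mono {c d : ℝ} (hf : HasAEDerivOn f f' a b) (h : uIcc c d ⊆ uIcc a b) :
    HasAEDerivOn f f' c d :=
  ⟨hf.1.mono h, by filter_upwards [hf.2] with t ht hmem using ht (h hmem)⟩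

lemma hasDerivWithinAt {t : ℝ} (hf : HasAEDerivOn f f' a b) (hf' : ContinuousOn f' (Icc a b))
    (ht : t ∈ Icc a b) : HasDerivWithinAt f (f' t) (Icc a b) t := by
  have hsub {s : ℝ} (hs : s ∈ Icc a b) : uIcc a s ⊆ uIcc a b :=
    uIcc_subset_uIcc_left (Icc_subset_uIcc hs)
  have hint (s : ℝ) (hs : s ∈ Icc a b) : f s = f a + ∫ τ in a..s, f' τ := by
    rw [(hf.mono (hsub hs)).integral_eq_sub, add_sub_cancel]
  have := Fact.mk ht
  refine (HasDerivWithinAt.const_add (f a) ?_).congr hint (hint t ht)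
  exact integral_hasDerivWithinAt_right (hf.mono (hsub ht)).intervalIntegrable
    (hf'.stronglyMeasurableAtFilter_nhdsWithin measurableSet_Icc t) (hf' t ht)

end HasAEDerivOn

section Volterra

lemma isUnit_one_sub_of_norm_pow_lt_one {R : Type*} [NormedRing R] [HasSummableGeomSeries R]
    {x : R} {n : ℕ} (h : ‖x ^ n‖ < 1) : IsUnit (1 - x) := by
  have hcomm : Commute (1 - x) (∑ i ∈ Finset.range n, x ^ i) :=
    Commute.sum_right _ _ _ fun i _ => (Commute.one_left _).sub_left (Commute.self_pow x i)
  have hn : IsUnit (1 - x ^ n) := isUnit_one_sub_of_norm_lt_one h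
  rw [← mul_neg_geom_sum] at hn
  exact (hcomm.isUnit_mul_iff.mp hn).1

variable {E : Type*} [NormedAddCommGroup E] [NormedSpace ℝ E] {a b : ℝ} {A : ℝ → E →L[ℝ] E}

lemma intervalIntegrable_clm_apply {y : ℝ → E} {c : ℝ} (hA : IntervalIntegrable A volume a b)
    (hy : Continuous y) (hyc : ∀ t, ‖y t‖ ≤ c) :
    IntervalIntegrable (fun s => A s (y s)) volume a b :=
  (hA.norm.mul_const c).mono_fun' ((ContinuousLinearMap.id ℝ (E →L[ℝ] E)).aestronglyMeasurable_comp₂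
    hA.aestronglyMeasurable_restrict_uIoc hy.aestronglyMeasurable)
    (.of_forall fun s => (A s).le_opNorm_of_le (hyc s))

lemma intervalIntegrable_left_of_mem_Icc {F : Type*} [NormedAddCommGroup F] {f : ℝ → F}
    (hf : IntervalIntegrable f volume a b) {t : ℝ} (ht : t ∈ Icc a b) :
    IntervalIntegrable f volume a t :=
  hf.mono_set (uIcc_subset_uIcc_left (Icc_subset_uIcc ht))

lemma intervalIntegrable_clm_apply_IccExtend (hab : a ≤ b) (hA : IntervalIntegrable A volume a b)
    (y : C(Icc a b, E)) : IntervalIntegrable (fun s => A s (IccExtend hab y s)) volume a b :=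
  intervalIntegrable_clm_apply hA y.continuous.Icc_extend' fun _ => y.norm_coe_le_norm _

lemma norm_integral_clm_apply_le {t : ℝ} {y : ℝ → E} {c : ℝ} {n : ℕ} (hat : a ≤ t)
    (hA : IntervalIntegrable A volume a t)
    (hy : ∀ s ∈ Ioc a t, ‖y s‖ ≤ (∫ r in a..s, ‖A r‖) ^ n * c) :
    ‖∫ s in a..t, A s (y s)‖ ≤ (∫ s in a..t, ‖A s‖) ^ (n + 1) / (n + 1) * c := by
  set Φ : ℝ → ℝ := fun s => ∫ r in a..s, ‖A r‖ with hΦ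
  have hderiv : HasAEDerivOn (fun s => Φ s ^ (n + 1)) (fun s => (n + 1) * (Φ s ^ n * ‖A s‖)) a t :=
    (HasAEDerivOn.of_eqOn_integral hA.norm fun s _ => by simp [hΦ]).pow_succ n
  have hn : (n + 1 : ℝ) ≠ 0 := by positivity
  calc ‖∫ s in a..t, A s (y s)‖
      ≤ ∫ s in a..t, c / (n + 1) * ((n + 1) * (Φ s ^ n * ‖A s‖)) := by
        refine intervalIntegral.norm_integral_le_of_norm_le hat (.of_forall fun s hs => ?_)
          (hderiv.intervalIntegrable.const_mul _)
        calc ‖A s (y s)‖ ≤ ‖A s‖ * (Φ s ^ n * c) := (A s).le_opNorm_of_le (hy s hs)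
          _ = c / (n + 1) * ((n + 1) * (Φ s ^ n * ‖A s‖)) := by field_simp
    _ = Φ t ^ (n + 1) / (n + 1) * c := by
        rw [intervalIntegral.integral_const_mul, hderiv.integral_eq_sub]
        simp only [hΦ, integral_same, zero_pow n.succ_ne_zero, sub_zero]
        ring

/-- The Volterra operator `(V y)(t) = ∫ₐᵗ A(s) y(s) ds` on continuous curves over `[a, b]`. The
integral equation of the linear differential equation `y' = A y` reads `(1 - V) y = y(a)`. -/
noncomputable def volterra (hab : a ≤ b) (A : ℝ → E →L[ℝ] E)
    (hA : IntervalIntegrable A volume a b) : C(Icc a b, E) →L[ℝ] C(Icc a b, E) :=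
  LinearMap.mkContinuous
    { toFun := fun y => ⟨fun t => ∫ s in a..(t : ℝ), A s (IccExtend hab y s),
        continuousOn_iff_continuous_domRestrict.1 <| (uIcc_of_le hab).subst <|
          continuousOn_primitive_interval' (intervalIntegrable_clm_apply_IccExtend hab hA y)
            left_mem_uIcc⟩
      map_add' := fun y z => ContinuousMap.ext fun t => by
        have hint (x) := intervalIntegrable_left_of_mem_Icc
          (intervalIntegrable_clm_apply_IccExtend hab hA x) t.2
        simpa [IccExtend] using integral_add (hint y) (hint z)
      map_smul' := fun c y => ContinuousMap.ext fun t => by simp [IccExtend] }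
    (∫ s in a..b, ‖A s‖) fun y => by
      have hA₀ : 0 ≤ ∫ s in a..b, ‖A s‖ := integral_nonneg hab fun _ _ => norm_nonneg _
      refine (ContinuousMap.norm_le _ (mul_nonneg hA₀ (norm_nonneg y))).2 fun t => ?_
      calc ‖∫ s in a..(t : ℝ), A s (IccExtend hab y s)‖
          ≤ (∫ s in a..(t : ℝ), ‖A s‖) ^ (0 + 1) / ((0 : ℕ) + 1) * ‖y‖ :=
            norm_integral_clm_apply_le t.2.1 (intervalIntegrable_left_of_mem_Icc hA t.2)
              fun s _ => by rw [pow_zero, one_mul]; exact y.norm_coe_le_norm _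
        _ ≤ (∫ s in a..b, ‖A s‖) * ‖y‖ := by
            rw [zero_add, pow_one, Nat.cast_zero, zero_add, div_one]
            gcongr
            exact integral_mono_interval le_rfl t.2.1 t.2.2 (.of_forall fun _ => norm_nonneg _)
              hA.norm

variable (hab : a ≤ b) (hA : IntervalIntegrable A volume a b)

lemma volterra_apply (y : C(Icc a b, E)) (t : Icc a b) :
    volterra hab A hA y t = ∫ s in a..(t : ℝ), A s (IccExtend hab y s) := rfl

lemma norm_volterra_pow_apply_le (n : ℕ) (y : C(Icc a b, E)) (t : Icc a b) :
    ‖(volterra hab A hA ^ n) y t‖ ≤ (∫ s in a..(t : ℝ), ‖A s‖) ^ n / (n.factorial : ℝ) * ‖y‖ := by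
  induction n generalizing t with
  | zero => simpa using y.norm_coe_le_norm t
  | succ n ih =>
    rw [pow_succ', mul_apply_eq_comp, volterra_apply]
    refine (norm_integral_clm_apply_le (n := n) (c := ‖y‖ / n.factorial) t.2.1
      (intervalIntegrable_left_of_mem_Icc hA t.2) fun s hs => ?_).trans_eq ?_
    · rw [IccExtend_of_mem hab _ ⟨hs.1.le, hs.2.trans t.2.2⟩]
      exact (ih ⟨s, _⟩).trans_eq (by ring)
    · rw [Nat.factorial_succ]
      push_cast
      field_simp

lemma isUnit_one_sub_volterra [CompleteSpace E] : IsUnit (1 - volterra hab A hA) := by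
  set c := ∫ s in a..b, ‖A s‖
  have hc : 0 ≤ c := integral_nonneg hab fun _ _ => norm_nonneg _
  have hnorm (n : ℕ) : ‖volterra hab A hA ^ n‖ ≤ c ^ n / n.factorial := by
    refine ContinuousLinearMap.opNorm_le_bound _ (by positivity) fun y => ?_
    refine (ContinuousMap.norm_le _ (by positivity)).2 fun t => ?_
    refine (norm_volterra_pow_apply_le hab hA n y t).trans ?_
    gcongr
    · exact integral_nonneg t.2.1 fun _ _ => norm_nonneg _
    · exact integral_mono_interval le_rfl t.2.1 t.2.2 (.of_forall fun _ => norm_nonneg _) hA.norm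
  obtain ⟨n, hn⟩ := ((FloorSemiring.tendsto_pow_div_factorial_atTop c).eventually_lt_const
    one_pos).exists
  exact isUnit_one_sub_of_norm_pow_lt_one (R := C(Icc a b, E) →L[ℝ] C(Icc a b, E))
    ((hnorm n).trans_lt hn)

end Volterra

section RotationEquation

namespace HasAEDerivOn

variable {a b : ℝ}

lemma sum {ι : Type*} {f f' : ι → ℝ → ℝ} (s : Finset ι)
    (h : ∀ i ∈ s, HasAEDerivOn (f i) (f' i) a b) :
    HasAEDerivOn (fun t => ∑ i ∈ s, f i t) (fun t => ∑ i ∈ s, f' i t) a b := by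
  induction s using Finset.cons_induction with
  | empty => simp only [Finset.sum_empty]; exact const 0
  | cons i s hi ih =>
    simpa only [Finset.sum_cons] using
      (h i (s.mem_cons_self i)).add (ih fun j hj => h j (Finset.mem_cons_of_mem hj))

lemma dotProduct {ι : Type*} [Fintype ι] {y y' z z' : ℝ → ι → ℝ}
    (hy : ∀ i, HasAEDerivOn (y · i) (y' · i) a b) (hz : ∀ i, HasAEDerivOn (z · i) (z' · i) a b) :
    HasAEDerivOn (fun t => y t ⬝ᵥ z t) (fun t => y' t ⬝ᵥ z t + y t ⬝ᵥ z' t) a b := by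
  simpa only [_root_.dotProduct, ← Finset.sum_add_distrib] using
    sum Finset.univ fun i _ => (hy i).mul (hz i)

lemma crossProduct {y y' z z' : ℝ → Fin 3 → ℝ}
    (hy : ∀ i, HasAEDerivOn (y · i) (y' · i) a b) (hz : ∀ i, HasAEDerivOn (z · i) (z' · i) a b)
    (i : Fin 3) :
    HasAEDerivOn (fun t => (y t ⨯₃ z t) i) (fun t => (y' t ⨯₃ z t + y t ⨯₃ z' t) i) a b := by
  have minor (j k : Fin 3) : HasAEDerivOn (fun t => y t j * z t k - y t k * z t j)
      (fun t => y' t j * z t k - y' t k * z t j + (y t j * z' t k - y t k * z' t j)) a b :=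
    (((hy j).mul (hz k)).sub ((hy k).mul (hz j))).congr_ae (.of_forall fun t _ => by ring)
  fin_cases i
  · simpa [cross_apply] using minor 1 2
  · simpa [cross_apply] using minor 2 0
  · simpa [cross_apply] using minor 0 1

end HasAEDerivOn

/-- `y` is an absolutely continuous solution on `[a, b]` of the forced rotation equation
`y' = ω × y + h`, stated coordinatewise because `HasAEDerivOn` concerns real functions. -/
def IsRotationSolution (ω h y : ℝ → Fin 3 → ℝ) (a b : ℝ) : Prop :=
  ∀ i, HasAEDerivOn (y · i) (fun t => (ω t ⨯₃ y t + h t) i) a b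

namespace IsRotationSolution

variable {ω h y z : ℝ → Fin 3 → ℝ} {a b : ℝ}

lemma dotProduct (hy : IsRotationSolution ω 0 y a b) (hz : IsRotationSolution ω h z a b) :
    HasAEDerivOn (fun t => y t ⬝ᵥ z t) (fun t => y t ⬝ᵥ h t) a b := by
  refine (HasAEDerivOn.dotProduct hy hz).congr_ae (.of_forall fun t _ => ?_)
  rw [Pi.zero_apply, add_zero, dotProduct_add, ← add_assoc, dotProduct_comm (ω t ⨯₃ y t),
    triple_product_permutation (z t), ← cross_anticomm, dotProduct_neg,
    ← triple_product_permutation (y t), neg_add_cancel, zero_add]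

lemma dotProduct_eq_left (hy : IsRotationSolution ω 0 y a b) (hz : IsRotationSolution ω 0 z a b)
    {t : ℝ} (ht : t ∈ uIcc a b) : y t ⬝ᵥ z t = y a ⬝ᵥ z a :=
  (hy.dotProduct hz).eq_left_of_ae_eq_zero (.of_forall fun s _ => dotProduct_zero (y s)) ht

lemma crossProduct (hy : IsRotationSolution ω 0 y a b) (hz : IsRotationSolution ω 0 z a b) :
    IsRotationSolution ω 0 (fun t => y t ⨯₃ z t) a b := fun i =>
  (HasAEDerivOn.crossProduct hy hz i).congr_ae <| .of_forall fun t _ => by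
    simp only [Pi.zero_apply, add_zero, leibniz_cross (ω t)]

end IsRotationSolution

/-- The cross product as a continuous bilinear map, so that `t ↦ crossCLM (ω t)` is the integrable
family of operators of the rotation equation. -/
noncomputable def crossCLM : (Fin 3 → ℝ) →L[ℝ] (Fin 3 → ℝ) →L[ℝ] (Fin 3 → ℝ) :=
  crossProduct.toContinuousBilinearMap

variable {a b : ℝ} {ω η : ℝ → Fin 3 → ℝ}

lemma intervalIntegrable_crossCLM (hω : IntervalIntegrable ω volume a b) :
    IntervalIntegrable (fun t => crossCLM (ω t)) volume a b :=
  ⟨crossCLM.integrable_comp hω.1, crossCLM.integrable_comp hω.2⟩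

/-- The Volterra operator of the rotation equation `y' = ω × y`. -/
noncomputable def rotationOp (hab : a ≤ b) (ω : ℝ → Fin 3 → ℝ)
    (hω : IntervalIntegrable ω volume a b) :
    C(Icc a b, Fin 3 → ℝ) →L[ℝ] C(Icc a b, Fin 3 → ℝ) :=
  volterra hab (fun t => crossCLM (ω t)) (intervalIntegrable_crossCLM hω)

variable (hab : a ≤ b) (hω : IntervalIntegrable ω volume a b)
  (hη : IntervalIntegrable η volume a b)

include hω in
lemma intervalIntegrable_crossProduct_IccExtend (y : C(Icc a b, Fin 3 → ℝ)) (i : Fin 3) :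
    IntervalIntegrable (fun s => (ω s ⨯₃ IccExtend hab y s) i) volume a b :=
  have h := intervalIntegrable_clm_apply_IccExtend hab (intervalIntegrable_crossCLM hω) y
  ⟨Integrable.eval h.1 i, Integrable.eval h.2 i⟩

lemma rotationOp_apply (y : C(Icc a b, Fin 3 → ℝ)) (t : Icc a b) (i : Fin 3) :
    rotationOp hab ω hω y t i = ∫ s in a..(t : ℝ), (ω s ⨯₃ IccExtend hab y s) i :=
  ((ContinuousLinearMap.proj (R := ℝ) (φ := fun _ : Fin 3 => ℝ) i).intervalIntegral_comp_comm
    (intervalIntegrable_left_of_mem_Icc (intervalIntegrable_clm_apply_IccExtend hab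
      (intervalIntegrable_crossCLM hω) y) t.2)).symm

lemma rotationOp_smul (c : ℝ) :
    rotationOp hab (c • ω) (hω.smul c) = c • rotationOp hab ω hω := by
  ext y t i
  simp [rotationOp_apply]

lemma rotationOp_add :
    rotationOp hab (ω + η) (hω.add hη) = rotationOp hab ω hω + rotationOp hab η hη := by
  ext y t i
  have hint {ω : ℝ → Fin 3 → ℝ} (hω : IntervalIntegrable ω volume a b) :=
    intervalIntegrable_left_of_mem_Icc (intervalIntegrable_crossProduct_IccExtend hab hω y i) t.2
  simp [rotationOp_apply, integral_add (hint hω) (hint hη)]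

lemma rotationOp_sub :
    rotationOp hab (ω - η) (hω.sub hη) = rotationOp hab ω hω - rotationOp hab η hη := by
  rw [eq_sub_iff_add_eq, ← rotationOp_add]
  simp only [sub_add_cancel]

lemma isUnit_one_sub_rotationOp : IsUnit (1 - rotationOp hab ω hω) := isUnit_one_sub_volterra hab _

lemma eq_ringInverse_one_sub_apply_iff {E : Type*} [NormedAddCommGroup E] [NormedSpace ℝ E]
    {T : E →L[ℝ] E} (hT : IsUnit (1 - T)) {x y : E} :
    y = Ring.inverse (1 - T) x ↔ y = T y + x := by
  have hleft := DFunLike.congr_fun (Ring.inverse_mul_cancel (1 - T) hT) y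
  have hright := DFunLike.congr_fun (Ring.mul_inverse_cancel (1 - T) hT) x
  rw [← sub_eq_iff_eq_add']
  exact ⟨fun h => h ▸ hright, fun h => by rw [← h]; exact hleft.symm⟩

include hω in
lemma isRotationSolution_IccExtend {h : ℝ → Fin 3 → ℝ} {y F : C(Icc a b, Fin 3 → ℝ)}
    {n : Fin 3 → ℝ} (hh : ∀ i, IntervalIntegrable (h · i) volume a b)
    (hF : ∀ t i, F t i = ∫ s in a..(t : ℝ), h s i)
    (hy : y = Ring.inverse (1 - rotationOp hab ω hω) (F + ContinuousMap.const _ n)) :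
    IsRotationSolution ω h (IccExtend hab y) a b ∧ IccExtend hab y a = n := by
  rw [eq_ringInverse_one_sub_apply_iff (isUnit_one_sub_rotationOp hab hω), ← add_assoc] at hy
  have hint (i) := intervalIntegrable_crossProduct_IccExtend hab hω y i
  have heq (t : ℝ) (ht : t ∈ Icc a b) (i : Fin 3) :
      IccExtend hab y t i = n i + ∫ s in a..t, (ω s ⨯₃ IccExtend hab y s + h s) i := by
    rw [IccExtend_of_mem hab _ ht, hy]
    simp only [ContinuousMap.add_apply, Pi.add_apply, hF, ContinuousMap.const_apply]
    rw [← hy, rotationOp_apply, intervalIntegral.integral_add, add_comm]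
    exacts [intervalIntegrable_left_of_mem_Icc (hint i) ht,
      intervalIntegrable_left_of_mem_Icc (hh i) ht]
  have hleft : IccExtend hab y a = n := by
    ext i
    rw [heq a (left_mem_Icc.2 hab) i, integral_same, add_zero]
  refine ⟨fun i => .of_eqOn_integral ((hint i).add (hh i)) fun t ht => ?_, hleft⟩
  rw [hleft]
  exact heq t (uIcc_of_le hab ▸ ht) i

include hω in
lemma isRotationSolution_ringInverse_const (n : Fin 3 → ℝ) :
    let y := IccExtend hab (Ring.inverse (1 - rotationOp hab ω hω) (ContinuousMap.const _ n))
    IsRotationSolution ω 0 y a b ∧ y a = n :=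
  isRotationSolution_IccExtend hab hω (F := 0) (fun _ => intervalIntegrable_const)
    (fun _ _ => by simp) (by rw [zero_add])

include hω hη in
lemma isRotationSolution_ringInverse_rotationOp (x : C(Icc a b, Fin 3 → ℝ)) :
    let y := IccExtend hab (Ring.inverse (1 - rotationOp hab ω hω) (rotationOp hab η hη x))
    IsRotationSolution ω (fun t => η t ⨯₃ IccExtend hab x t) y a b ∧ y a = 0 :=
  isRotationSolution_IccExtend hab hω (intervalIntegrable_crossProduct_IccExtend hab hη x)
    (rotationOp_apply hab hη x) (by rw [ContinuousMap.const_zero, add_zero])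

include hab hω in
/-- The flow is norm preserving, hence injective and therefore onto. -/
lemma exists_isRotationSolution_right_eq (p : Fin 3 → ℝ) :
    ∃ y, IsRotationSolution ω 0 y a b ∧ y b = p := by
  let flow : (Fin 3 → ℝ) →L[ℝ] (Fin 3 → ℝ) :=
    ContinuousMap.evalCLM ℝ ⟨b, right_mem_Icc.2 hab⟩ ∘L
      Ring.inverse (1 - rotationOp hab ω hω) ∘L ContinuousLinearMap.const ℝ (Icc a b)
  have hflow (n) := isRotationSolution_ringInverse_const hab hω n
  have hright (n) := IccExtend_right hab
    (Ring.inverse (1 - rotationOp hab ω hω) (ContinuousMap.const _ n))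
  have hinj : Function.Injective flow.toLinearMap := by
    refine (injective_iff_map_eq_zero _).2 fun n hn => ?_
    have hnorm := (hflow n).1.dotProduct_eq_left (hflow n).1 right_mem_uIcc
    rwa [(hflow n).2, (hright n).trans hn, zero_dotProduct, eq_comm,
      dotProduct_self_eq_zero] at hnorm
  obtain ⟨n, hn⟩ := LinearMap.injective_iff_surjective.1 hinj p
  exact ⟨_, (hflow n).1, (hright n).trans hn⟩

end RotationEquation

section MaximumPrinciple

lemma exists_hasStrictFDerivAt_ringInverse_one_sub {E F : Type*} [NormedAddCommGroup E]
    [NormedSpace ℝ E] [CompleteSpace E] [NormedAddCommGroup F] [NormedSpace ℝ F] (l : E →L[ℝ] F)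
    (x : E) {T : E →L[ℝ] E} (hT : IsUnit (1 - T)) :
    ∃ Φ' : ((E →L[ℝ] E) × ℝ) × ℝ →L[ℝ] F,
      HasStrictFDerivAt (fun q : ((E →L[ℝ] E) × ℝ) × ℝ =>
        l (Ring.inverse (1 - (1 - q.2) • q.1.1) (q.1.2 • x))) Φ' ((T, 1), 0) ∧
      ∀ D r, Φ' ((D, r), 0) =
        l (Ring.inverse (1 - T) (D (Ring.inverse (1 - T) x)) + r • Ring.inverse (1 - T) x) := by
  obtain ⟨U, hU⟩ := hT
  have hs : HasStrictFDerivAt (fun q : ((E →L[ℝ] E) × ℝ) × ℝ => q.2) (.snd ℝ _ ℝ) ((T, 1), 0) :=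
    hasStrictFDerivAt_snd
  have hfst : HasStrictFDerivAt (fun q : ((E →L[ℝ] E) × ℝ) × ℝ => q.1) (.fst ℝ _ ℝ) ((T, 1), 0) :=
    hasStrictFDerivAt_fst
  have hop : HasStrictFDerivAt (fun q : ((E →L[ℝ] E) × ℝ) × ℝ => 1 - (1 - q.2) • q.1.1) _
      ((T, 1), 0) :=
    ((hs.const_sub 1).smul hfst.fst).const_sub 1
  have hinv := HasStrictFDerivAt.comp ((T, (1 : ℝ)), (0 : ℝ))
    (by simpa [← hU] using hasStrictFDerivAt_ringInverse (𝕜 := ℝ) U) hop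
  have harg : HasStrictFDerivAt (fun q : ((E →L[ℝ] E) × ℝ) × ℝ => q.1.2 • x) _ ((T, 1), 0) :=
    hfst.snd.smul_const x
  refine ⟨_, l.hasStrictFDerivAt.comp _ (hinv.clm_apply harg), fun D r => ?_⟩
  simp [← hU, add_comm]

lemma exists_multiplier_ringInverse_one_sub {E F : Type*} [NormedAddCommGroup E]
    [NormedSpace ℝ E] [CompleteSpace E] [NormedAddCommGroup F] [NormedSpace ℝ F]
    [FiniteDimensional ℝ F] (l : E →L[ℝ] F) (x : E) {K : Set (E →L[ℝ] E)} (hK : Convex ℝ K)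
    {T : E →L[ℝ] E} (hTK : T ∈ K) (hT : IsUnit (1 - T))
    (hne : ∀ c ∈ Ioo (0 : ℝ) 1, ∀ S ∈ K, ∀ r > (0 : ℝ),
      l (Ring.inverse (1 - c • S) (r • x)) ≠ l (Ring.inverse (1 - T) x)) :
    ∃ p : StrongDual ℝ F, p ≠ 0 ∧ p (l (Ring.inverse (1 - T) x)) = 0 ∧
      ∀ S ∈ K, p (l (Ring.inverse (1 - T) ((S - T) (Ring.inverse (1 - T) x)))) ≤ 0 := by
  obtain ⟨Φ', hΦ, hΦ'⟩ := exists_hasStrictFDerivAt_ringInverse_one_sub l x hT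
  have hmem : (T, (1 : ℝ)) ∈ K ×ˢ Ioi (0 : ℝ) := ⟨hTK, mem_Ioi.2 one_pos⟩
  obtain ⟨p, hp0, hp⟩ := exists_multiplier (hK.prod (convex_Ioi 0)) hmem hΦ <| by
    filter_upwards [Ioo_mem_nhdsGT one_pos] with s hs
    rintro ⟨S, r⟩ ⟨hS, hr⟩
    simpa using hne (1 - s) ⟨by linarith [hs.2], by linarith [hs.1]⟩ S hS r hr
  have hle {S} (hS : S ∈ K) {r : ℝ} (hr : 0 < r) := hp (S, r) ⟨hS, hr⟩
  simp only [Prod.mk_sub_mk, hΦ', map_add, map_smul, smul_eq_mul] at hle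
  have hzero : p (l (Ring.inverse (1 - T) x)) = 0 := by
    have hhalf := hle hTK one_half_pos
    have htwo := hle hTK two_pos
    simp only [sub_self, _root_.zero_apply, map_zero] at hhalf htwo
    linarith
  exact ⟨p, hp0, hzero, fun S hS => by simpa [hzero] using hle hS one_pos⟩

/-- An admissible control on `[a, b]`: as in `AdmissiblePairS`, a function on all of `ℝ` whose
values outside `[a, b]` are unconstrained. -/
structure IsControl (a b : ℝ) (v : ℝ → ℝ) : Prop where
  measurable : Measurable v
  abs_le_one : ∀ t ∈ Icc a b, |v t| ≤ 1

/-- The angular velocity of the control value `v`: the velocity `F_S(y) + v · G_S(y)` is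
`axis α v ⨯₃ y`. -/
noncomputable def axis (α v : ℝ) : Fin 3 → ℝ := ![sin α * v, 0, cos α]

lemma FS_add_mul_GS (α v : ℝ) (y : Fin 3 → ℝ) (i : Fin 3) :
    FS α y i + v * GS α y i = (axis α v ⨯₃ y) i := by
  fin_cases i <;> simp [FS, GS, axis, cross_apply] <;> ring

lemma smul_axis_add_smul_axis {α v w c d : ℝ} (hcd : c + d = 1) :
    c • axis α v + d • axis α w = axis α (c * v + d * w) := by
  ext i
  fin_cases i
  · simp [axis]; ring
  · simp [axis]
  · simp [axis, ← add_mul, hcd]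

lemma dotProduct_axis_sub_axis_cross (α v w : ℝ) (l g : Fin 3 → ℝ) :
    l ⬝ᵥ ((axis α v - axis α w) ⨯₃ g) = (v - w) * (sin α * (g ⨯₃ l) 0) := by
  rw [vec3_dotProduct]
  simp [axis, cross_apply]
  ring

lemma axis_dotProduct_self (α v : ℝ) : axis α v ⬝ᵥ axis α v = sin α ^ 2 * v ^ 2 + cos α ^ 2 := by
  simp [axis]
  ring

variable {α a b : ℝ} {γ : ℝ → Fin 3 → ℝ} {u v w : ℝ → ℝ}

lemma IsControl.intervalIntegrable (hv : IsControl a b v) (hab : a ≤ b) :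
    IntervalIntegrable v volume a b :=
  intervalIntegrable_const.mono_fun' hv.measurable.aestronglyMeasurable <|
    (ae_restrict_iff' measurableSet_uIoc).2 <| .of_forall fun t ht =>
      hv.abs_le_one t (Ioc_subset_Icc_self (uIoc_of_le hab ▸ ht))

lemma IsControl.intervalIntegrable_axis (hv : IsControl a b v) (hab : a ≤ b) (α : ℝ) :
    IntervalIntegrable (fun t => axis α (v t)) volume a b := by
  have haxis (t : ℝ) : axis α (v t) = v t • ![sin α, 0, 0] + ![0, 0, cos α] := by
    ext i
    fin_cases i <;> simp [axis, mul_comm]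
  simp only [haxis]
  have h := hv.intervalIntegrable hab
  exact .add ⟨h.1.smul_const _, h.2.smul_const _⟩ intervalIntegrable_const

lemma IsControl.convexCombination (hv : IsControl a b v) (hw : IsControl a b w) {c d : ℝ}
    (hc : 0 ≤ c) (hd : 0 ≤ d) (hcd : c + d = 1) : IsControl a b fun t => c * v t + d * w t where
  measurable := (hv.measurable.const_mul c).add (hw.measurable.const_mul d)
  abs_le_one t ht := abs_le.2 <|
    convex_Icc (-1) 1 (abs_le.1 (hv.abs_le_one t ht)) (abs_le.1 (hw.abs_le_one t ht)) hc hd hcd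

/-- The Volterra operator of the state equation under the control `v`. -/
noncomputable def controlOp (α : ℝ) (hab : a ≤ b) (hv : IsControl a b v) :
    C(Icc a b, Fin 3 → ℝ) →L[ℝ] C(Icc a b, Fin 3 → ℝ) :=
  rotationOp hab (fun t => axis α (v t)) (hv.intervalIntegrable_axis hab α)

lemma isUnit_one_sub_controlOp (hab : a ≤ b) (hv : IsControl a b v) :
    IsUnit (1 - controlOp α hab hv) := isUnit_one_sub_rotationOp hab _

lemma convex_range_controlOp (α : ℝ) (hab : a ≤ b) :
    Convex ℝ {T | ∃ v, ∃ hv : IsControl a b v, T = controlOp α hab hv} := by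
  rintro _ ⟨v, hv, rfl⟩ _ ⟨w, hw, rfl⟩ c d hc hd hcd
  refine ⟨_, hv.convexCombination hw hc hd hcd, ?_⟩
  simp only [controlOp, ← rotationOp_smul, ← rotationOp_add, ← smul_axis_add_smul_axis hcd]
  rfl

lemma dotProduct_ringInverse_sub_apply (hab : a ≤ b) (hv : IsControl a b v)
    (hw : IsControl a b w) (x : C(Icc a b, Fin 3 → ℝ)) {l : ℝ → Fin 3 → ℝ}
    (hl : IsRotationSolution (fun t => axis α (v t)) 0 l a b) :
    l b ⬝ᵥ Ring.inverse (1 - controlOp α hab hv) ((controlOp α hab hw - controlOp α hab hv) x)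
      ⟨b, right_mem_Icc.2 hab⟩ =
    ∫ t in a..b, (w t - v t) * (sin α * (IccExtend hab x t ⨯₃ l t) 0) := by
  have hωv := hv.intervalIntegrable_axis hab α
  have hωw := hw.intervalIntegrable_axis hab α
  obtain ⟨hz, hza⟩ := isRotationSolution_ringInverse_rotationOp hab hωv (hωw.sub hωv) x
  have hsub := (hl.dotProduct hz).integral_eq_sub
  rw [hza, dotProduct_zero, sub_zero, IccExtend_right] at hsub
  have hop : controlOp α hab hw - controlOp α hab hv = rotationOp hab _ (hωw.sub hωv) :=
    (rotationOp_sub hab hωw hωv).symm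
  rw [hop]
  refine hsub.symm.trans (integral_congr fun t _ => ?_)
  exact dotProduct_axis_sub_axis_cross α (w t) (v t) (l t) _

namespace AdmissiblePairS

lemma isControl (h : AdmissiblePairS α a b γ u) : IsControl a b u := ⟨h.humeas, h.hubound⟩

lemma dotProduct_self (h : AdmissiblePairS α a b γ u) {t : ℝ} (ht : t ∈ Icc a b) :
    γ t ⬝ᵥ γ t = 1 := by
  rw [vec3_dotProduct, ← h.hsph t ht]
  ring

lemma ringInverse_apply (h : AdmissiblePairS α a b γ u) (t : Icc a b) :
    Ring.inverse (1 - controlOp α h.hab h.isControl) (ContinuousMap.const _ (γ a)) t = γ t := by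
  let Γ : C(Icc a b, Fin 3 → ℝ) := ⟨fun t => γ t, h.hcont.domRestrict⟩
  have hΓ (t : Icc a b) : Γ t = γ t := rfl
  suffices Γ = Ring.inverse (1 - controlOp α h.hab h.isControl) (ContinuousMap.const _ (γ a)) by
    rw [← this, hΓ]
  rw [eq_ringInverse_one_sub_apply_iff (isUnit_one_sub_controlOp h.hab h.isControl)]
  ext t i
  rw [ContinuousMap.add_apply, Pi.add_apply, controlOp, rotationOp_apply,
    ContinuousMap.const_apply, hΓ, h.hode t t.2 i, add_comm]
  congr 1
  refine integral_congr fun s hs => ?_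
  rw [uIcc_of_le t.2.1] at hs
  simp only [FS_add_mul_GS]
  rw [IccExtend_of_mem h.hab _ ⟨hs.1, hs.2.trans t.2.2⟩, hΓ]

lemma isRotationSolution (h : AdmissiblePairS α a b γ u) :
    IsRotationSolution (fun t => axis α (u t)) 0 γ a b := by
  obtain ⟨hg, -⟩ := isRotationSolution_ringInverse_const h.hab
    (h.isControl.intervalIntegrable_axis h.hab α) (γ a)
  intro i
  have hint : IntervalIntegrable (fun t => (axis α (u t) ⨯₃ γ t + 0) i) volume a b := by
    refine (hg i).intervalIntegrable.congr fun t ht => ?_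
    have htI := Ioc_subset_Icc_self (uIoc_of_le h.hab ▸ ht)
    simp only [IccExtend_of_mem h.hab _ htI, ← h.ringInverse_apply ⟨t, htI⟩]
    rfl
  refine .of_eqOn_integral hint fun t ht => ?_
  simpa only [FS_add_mul_GS, Pi.zero_apply, add_zero] using h.hode t (uIcc_of_le h.hab ▸ ht) i

/-- Running a trajectory at speed `1 / c` undoes the scaling of the velocity by `c`. -/
lemma of_isRotationSolution_smul {c : ℝ} (hc : 0 < c) (hab : a ≤ b) (hv : IsControl a b v)
    {y : ℝ → Fin 3 → ℝ} (hy : IsRotationSolution (c • fun t => axis α (v t)) 0 y a b)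
    (hya : y a ⬝ᵥ y a = 1) :
    AdmissiblePairS α a (a + c * (b - a)) (fun t => y (a + (t - a) / c))
      (fun t => v (a + (t - a) / c)) := by
  have hmem {t : ℝ} (ht : t ∈ Icc a (a + c * (b - a))) : a + (t - a) / c ∈ Icc a b := by
    have hle : (t - a) / c ≤ b - a := by rw [div_le_iff₀' hc]; linarith [ht.2]
    exact ⟨le_add_of_nonneg_right (div_nonneg (sub_nonneg.2 ht.1) hc.le), by linarith⟩
  refine ⟨le_add_of_nonneg_right (mul_nonneg hc.le (sub_nonneg.2 hab)),
    hv.measurable.comp (by fun_prop), fun t ht => hv.abs_le_one _ (hmem ht), fun t ht => ?_, ?_,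
    fun t ht i => ?_⟩
  · rw [← hya, ← hy.dotProduct_eq_left hy (Icc_subset_uIcc (hmem ht)), vec3_dotProduct]
    ring
  · exact continuousOn_pi.2 fun i => (hy i).1.continuousOn.comp (by fun_prop)
      fun t ht => Icc_subset_uIcc (hmem ht)
  · have hsub := ((hy i).mono (uIcc_subset_uIcc_left (Icc_subset_uIcc (hmem ht)))).integral_eq_sub
    have hφ (s : ℝ) : a + (s - a) / c = a - a / c + s / c := by ring
    simp only [FS_add_mul_GS, sub_self, zero_div, add_zero, hφ] at hsub ⊢
    rw [integral_comp_add_div (fun τ => (axis α (v τ) ⨯₃ y τ) i) hc.ne', sub_add_cancel,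
      ← sub_eq_iff_eq_add', ← hsub, ← intervalIntegral.integral_smul]
    simp

end AdmissiblePairS

namespace TimeOptimalS

lemma right_ne_of_isRotationSolution_smul (h : TimeOptimalS α a b γ u) (hab : a < b)
    (hv : IsControl a b v) {c r : ℝ} (hc : c ∈ Ioo 0 1) (hr : 0 < r) {y : ℝ → Fin 3 → ℝ}
    (hy : IsRotationSolution (c • fun t => axis α (v t)) 0 y a b) (hya : y a = r • γ a) :
    y b ≠ γ b := by
  intro hyb
  have hγa := h.1.dotProduct_self (left_mem_Icc.2 hab.le)
  have hr1 : r = 1 := by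
    have hnorm := hy.dotProduct_eq_left hy right_mem_uIcc
    rw [hyb, hya, smul_dotProduct, dotProduct_smul, hγa,
      h.1.dotProduct_self (right_mem_Icc.2 hab.le), smul_eq_mul, smul_eq_mul, mul_one] at hnorm
    nlinarith
  rw [hr1, one_smul] at hya
  have hadm := AdmissiblePairS.of_isRotationSolution_smul hc.1 hab.le hv hy (by rwa [hya])
  have hle := h.2 _ _ _ _ hadm (by simp [hya]) (by simpa [hc.1.ne'] using hyb)
  nlinarith [hc.2]

lemma exists_multiplier (h : TimeOptimalS α a b γ u) (hab : a < b) :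
    ∃ p : Fin 3 → ℝ, p ≠ 0 ∧ p ⬝ᵥ γ b = 0 ∧ ∀ v (hv : IsControl a b v),
      let R := Ring.inverse (1 - controlOp α hab.le h.1.isControl)
      p ⬝ᵥ R ((controlOp α hab.le hv - controlOp α hab.le h.1.isControl)
        (R (ContinuousMap.const _ (γ a)))) ⟨b, right_mem_Icc.2 hab.le⟩ ≤ 0 := by
  obtain ⟨P, hP0, hPγ, hP⟩ := exists_multiplier_ringInverse_one_sub
    (ContinuousMap.evalCLM ℝ ⟨b, right_mem_Icc.2 hab.le⟩) (ContinuousMap.const _ (γ a))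
    (convex_range_controlOp α hab.le) ⟨u, h.1.isControl, rfl⟩
    (isUnit_one_sub_controlOp hab.le h.1.isControl) <| by
      rintro c hc _ ⟨v, hv, rfl⟩ r hr heq
      rw [controlOp, ← rotationOp_smul] at heq
      obtain ⟨hy, hya⟩ := isRotationSolution_ringInverse_const hab.le
        ((hv.intervalIntegrable_axis hab.le α).smul c) (r • γ a)
      exact h.right_ne_of_isRotationSolution_smul hab hv hc hr hy hya
        ((IccExtend_right hab.le _).trans (heq.trans (h.1.ringInverse_apply _)))
  obtain ⟨p, hp⟩ := (dotProductEquiv ℝ (Fin 3)).surjective P.toLinearMap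
  have hpP (z : Fin 3 → ℝ) : p ⬝ᵥ z = P z := DFunLike.congr_fun hp z
  refine ⟨p, ?_, ?_, fun v hv => (hpP _).trans_le (hP _ ⟨v, hv, rfl⟩)⟩
  · rintro rfl
    exact hP0 (ContinuousLinearMap.ext fun z => by rw [← hpP, zero_dotProduct]; rfl)
  · rw [hpP, ← hPγ]
    exact congrArg P (h.1.ringInverse_apply ⟨b, right_mem_Icc.2 hab.le⟩).symm

lemma exists_momentum (h : TimeOptimalS α a b γ u) (hab : a < b) :
    ∃ M, IsRotationSolution (fun t => axis α (u t)) 0 M a b ∧ M a ≠ 0 ∧ M a ⬝ᵥ γ a = 0 ∧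
      ∀ v, IsControl a b v → ∫ t in a..b, (v t - u t) * (sin α * M t 0) ≤ 0 := by
  have hu := h.1.isControl
  obtain ⟨p, hp0, hpγ, hp⟩ := h.exists_multiplier hab
  obtain ⟨l, hl, rfl⟩ :=
    exists_isRotationSolution_right_eq hab.le (hu.intervalIntegrable_axis hab.le α) p
  have hM := h.1.isRotationSolution.crossProduct hl
  refine ⟨_, hM, fun hMa => hp0 ?_, (dotProduct_comm _ _).trans (dot_self_cross _ _),
    fun v hv => ?_⟩
  · have hMb := hM.dotProduct_eq_left hM right_mem_uIcc
    rwa [hMa, zero_dotProduct, cross_dot_cross, h.1.dotProduct_self (right_mem_Icc.2 hab.le),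
      hpγ, mul_zero, sub_zero, one_mul, dotProduct_self_eq_zero] at hMb
  · have hvar := dotProduct_ringInverse_sub_apply hab.le hu hv
      (Ring.inverse (1 - controlOp α hab.le hu) (ContinuousMap.const _ (γ a))) hl
    refine (Eq.trans ?_ hvar.symm).trans_le (hp v hv)
    refine integral_congr fun t ht => ?_
    rw [uIcc_of_le hab.le] at ht
    simp only [IccExtend_of_mem hab.le _ ht, h.1.ringInverse_apply]

end TimeOptimalS

end MaximumPrinciple

section BangBang

lemma finite_setOf_eq_zero_of_hasDerivWithinAt {f f' : ℝ → ℝ} {K : Set ℝ} (hK : IsCompact K)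
    (hf : ∀ t ∈ K, HasDerivWithinAt f (f' t) K t) (hf' : ∀ t ∈ K, f t = 0 → f' t ≠ 0) :
    {t ∈ K | f t = 0}.Finite := by
  by_contra hinf
  obtain ⟨t, htK, hacc⟩ := Set.Infinite.exists_accPt_of_subset_isCompact hinf hK (sep_subset K _)
  have hclosed : IsClosed {t ∈ K | f t = 0} :=
    ContinuousOn.preimage_isClosed_of_isClosed (fun t ht => (hf t ht).continuousWithinAt)
      hK.isClosed isClosed_singleton
  have ht0 : f t = 0 := (isClosed_iff_accPt.1 hclosed t hacc).2
  have hne := eventually_nhdsWithin_iff.1 ((hf t htK).eventually_ne (c := 0) (hf' t htK ht0))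
  obtain ⟨s, ⟨hsK, hs0⟩, hs, hst⟩ :=
    ((accPt_iff_frequently_nhdsNE.1 hacc).and_eventually <|
      (hne.filter_mono nhdsWithin_le_nhds).and self_mem_nhdsWithin).exists
  exact hs ⟨hsK, hst⟩ hs0

lemma sq_dotProduct_le {n : Type*} [Fintype n] {e x : n → ℝ} (he : e ⬝ᵥ e = 1) (hxe : x ⬝ᵥ e = 0)
    (w : n → ℝ) : (w ⬝ᵥ x) ^ 2 ≤ (w ⬝ᵥ w - (w ⬝ᵥ e) ^ 2) * (x ⬝ᵥ x) := by
  have hcs := Finset.sum_mul_sq_le_sq_mul_sq Finset.univ (w - (w ⬝ᵥ e) • e) x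
  simp only [sq (_ : ℝ)] at hcs ⊢
  change (_ ⬝ᵥ _) * (_ ⬝ᵥ _) ≤ (_ ⬝ᵥ _) * (_ ⬝ᵥ _) at hcs
  simp only [sub_dotProduct, dotProduct_sub, smul_dotProduct, dotProduct_smul, he,
    dotProduct_comm e, hxe, smul_eq_mul] at hcs
  linarith

variable {α a b : ℝ} {u k : ℝ → ℝ} {M : ℝ → Fin 3 → ℝ}

lemma IsControl.ae_mul_eq_abs (hu : IsControl a b u) (hab : a ≤ b)
    (hk : ContinuousOn k (Icc a b))
    (hle : ∀ v, IsControl a b v → ∫ t in a..b, (v t - u t) * k t ≤ 0) :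
    ∀ᵐ t, t ∈ Icc a b → u t * k t = |k t| := by
  let P := Icc a b ∩ k ⁻¹' Ici 0
  have hP : MeasurableSet P :=
    (hk.preimage_isClosed_of_isClosed isClosed_Icc isClosed_Ici).measurableSet
  classical
  let v : ℝ → ℝ := P.piecewise 1 (-1)
  have hv : IsControl a b v :=
    ⟨measurable_one.piecewise hP measurable_one.neg, fun t _ => by by_cases t ∈ P <;> simp [v, *]⟩
  have hvk (t : ℝ) (ht : t ∈ Icc a b) : v t * k t = |k t| := by
    rcases le_or_gt 0 (k t) with h | h
    · simp [v, piecewise_eq_of_mem P _ _ (⟨ht, h⟩ : t ∈ P), abs_of_nonneg h]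
    · simp [v, piecewise_eq_of_notMem P _ _ fun hP : t ∈ P => h.not_ge hP.2, abs_of_neg h]
  have hnonneg (t : ℝ) (ht : t ∈ Icc a b) : 0 ≤ (v t - u t) * k t := by
    rw [sub_mul, hvk t ht, sub_nonneg]
    refine (le_abs_self _).trans ?_
    rw [abs_mul]
    exact mul_le_of_le_one_left (abs_nonneg _) (hu.abs_le_one t ht)
  have hint : IntervalIntegrable (fun t => (v t - u t) * k t) volume a b :=
    ((hv.intervalIntegrable hab).sub (hu.intervalIntegrable hab)).mul_continuousOn
      (uIcc_of_le hab ▸ hk)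
  have hzero := (integral_eq_zero_iff_of_le_of_nonneg_ae hab
    ((ae_restrict_iff' measurableSet_Ioc).2 <|
      .of_forall fun t ht => hnonneg t (Ioc_subset_Icc_self ht)) hint).1
    ((hle v hv).antisymm (intervalIntegral.integral_nonneg hab hnonneg))
  rw [Measure.restrict_congr_set Ioc_ae_eq_Icc] at hzero
  filter_upwards [(ae_restrict_iff' measurableSet_Icc).1 hzero] with t ht htI
  rw [← hvk t htI, ← sub_eq_zero, ← neg_sub, ← sub_mul, neg_eq_zero]
  exact ht htI

namespace IsRotationSolution

lemma axis_apply_zero (hM : IsRotationSolution (fun t => axis α (u t)) 0 M a b) :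
    HasAEDerivOn (M · 0) (fun t => -(cos α * M t 1)) a b :=
  (hM 0).congr_ae (.of_forall fun t _ => by simp [axis, cross_apply])

lemma axis_apply_two (hM : IsRotationSolution (fun t => axis α (u t)) 0 M a b) :
    HasAEDerivOn (M · 2) (fun t => sin α * u t * M t 1) a b :=
  (hM 2).congr_ae (.of_forall fun t _ => by simp [axis, cross_apply])

lemma hamiltonian_eq_left (hM : IsRotationSolution (fun t => axis α (u t)) 0 M a b)
    (hmax : ∀ᵐ t, t ∈ uIcc a b → u t * (sin α * M t 0) = |sin α * M t 0|) {t : ℝ}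
    (ht : t ∈ uIcc a b) :
    cos α * M t 2 + |sin α * M t 0| = cos α * M a 2 + |sin α * M a 0| :=
  ((hM.axis_apply_two.const_mul (cos α)).add
    ((hM.axis_apply_zero.const_mul (sin α)).abs hmax)).eq_left_of_ae_eq_zero
    (.of_forall fun t _ => by ring) ht

end IsRotationSolution

lemma exists_axis_dotProduct_eq (α : ℝ) (x : Fin 3 → ℝ) :
    ∃ v, (v = 1 ∨ v = -1) ∧ axis α v ⬝ᵥ x = cos α * x 2 + |sin α * x 0| := by
  have haxis (v : ℝ) : axis α v ⬝ᵥ x = cos α * x 2 + v * (sin α * x 0) := by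
    rw [vec3_dotProduct]
    simp only [axis, cons_val_zero, cons_val_one, cons_val]
    ring
  rcases abs_choice (sin α * x 0) with h | h
  · exact ⟨1, .inl rfl, by rw [haxis, h, one_mul]⟩
  · exact ⟨-1, .inr rfl, by rw [haxis, h, neg_one_mul]⟩

/-- A tangential zero would force `|H| = |cos α| ‖M‖` for the conserved Hamiltonian `H`, whereas
`H = axis α (±1) ⬝ᵥ M a` with `M a` orthogonal to `e`, which makes it strictly smaller. -/
lemma IsRotationSolution.cos_mul_apply_one_ne_zero
    (hM : IsRotationSolution (fun t => axis α (u t)) 0 M a b)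
    (hmax : ∀ᵐ t, t ∈ uIcc a b → u t * (sin α * M t 0) = |sin α * M t 0|)
    (hMa : M a ≠ 0) {e : Fin 3 → ℝ} (he : e ⬝ᵥ e = 1) (hMe : M a ⬝ᵥ e = 0)
    (haxis : ∀ v, v = 1 ∨ v = -1 → |sin α| < |axis α v ⬝ᵥ e|) {t : ℝ} (ht : t ∈ uIcc a b)
    (hMt : M t 0 = 0) : cos α * M t 1 ≠ 0 := by
  intro htan
  obtain ⟨v, hv, hvM⟩ := exists_axis_dotProduct_eq α (M a)
  have hham := hM.hamiltonian_eq_left hmax ht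
  rw [← hvM, hMt, mul_zero, abs_zero, add_zero] at hham
  have hnorm : (cos α * M t 2) ^ 2 = cos α ^ 2 * (M a ⬝ᵥ M a) := by
    rw [← hM.dotProduct_eq_left hM ht, vec3_dotProduct, hMt]
    linear_combination -(cos α * M t 1) * htan
  have hbessel := sq_dotProduct_le he hMe (axis α v)
  rw [← hham, hnorm, axis_dotProduct_self, sq_eq_one_iff.2 hv, mul_one] at hbessel
  have hpos : 0 < M a ⬝ᵥ M a := by simpa using dotProduct_star_self_pos_iff.2 hMa
  have hlt := sq_lt_sq.2 (haxis v hv)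
  nlinarith

lemma eventually_abs_eq_mul {X : Type*} [TopologicalSpace X] {s : Set X} {f : X → ℝ} {x : X}
    (hf : ContinuousWithinAt f s x) (hx : f x ≠ 0) :
    ∃ c : ℝ, (c = 1 ∨ c = -1) ∧ ∀ᶠ y in 𝓝[s] x, f y ≠ 0 ∧ |f y| = c * f y := by
  rcases hx.lt_or_gt with hneg | hpos
  · refine ⟨-1, .inr rfl, ?_⟩
    filter_upwards [hf.eventually_lt_const hneg] with y hy
    exact ⟨hy.ne, by rw [abs_of_neg hy, neg_one_mul]⟩
  · refine ⟨1, .inl rfl, ?_⟩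
    filter_upwards [hf.eventually_const_lt hpos] with y hy
    exact ⟨hy.ne', by rw [abs_of_pos hy, one_mul]⟩

lemma ae_abs_eq_one_of_mul_eq_abs (hmax : ∀ᵐ t, t ∈ Icc a b → u t * k t = |k t|)
    (hfin : {t ∈ Icc a b | k t = 0}.Finite) :
    ∀ᵐ t ∂(volume.restrict (Icc a b)), |u t| = 1 := by
  rw [ae_restrict_iff' measurableSet_Icc]
  filter_upwards [hmax, measure_eq_zero_iff_ae_notMem.1 (hfin.measure_zero volume)]
    with t hmul hk ht
  have hk0 : k t ≠ 0 := fun h => hk ⟨ht, h⟩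
  have habs := congrArg abs (hmul ht)
  rwa [abs_mul, abs_abs, mul_eq_right₀ (abs_ne_zero.2 hk0)] at habs

lemma eq_zero_of_isSwitching (hk : ContinuousOn k (Icc a b))
    (hmax : ∀ᵐ t, t ∈ Icc a b → u t * k t = |k t|) {t : ℝ} (ht : IsSwitching a b u t) :
    k t = 0 := by
  by_contra hk0
  obtain ⟨c, hc, hev⟩ := eventually_abs_eq_mul (hk t ht.1) hk0
  obtain ⟨ε, hε, hball⟩ := Metric.mem_nhdsWithin_iff.1 hev
  refine ht.2 ε hε ⟨c, hc, ?_⟩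
  rw [ae_restrict_iff' (measurableSet_Ioo.inter measurableSet_Icc), ← ball_eq_Ioo]
  filter_upwards [hmax] with s hmul hs
  obtain ⟨hks, habs⟩ := hball hs
  exact mul_right_cancel₀ hks ((hmul hs.2).trans habs)

end BangBang

/-- `haxis` keeps `γ a` away from the planes orthogonal to the rotation axes of the two bang arcs;
at the north pole it reads `|sin α| < |cos α|`. -/
theorem regular_bang_bang_general {α a b : ℝ} {γ : ℝ → Fin 3 → ℝ} {u : ℝ → ℝ} (hα : sin α ≠ 0)
    (hopt : TimeOptimalS α a b γ u)
    (haxis : ∀ v, v = 1 ∨ v = -1 → |sin α| < |axis α v ⬝ᵥ γ a|) :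
    (∀ᵐ t ∂(volume.restrict (Icc a b)), |u t| = 1) ∧ {t | IsSwitching a b u t}.Finite := by
  rcases hopt.1.hab.eq_or_lt with rfl | hab
  · rw [Icc_self, Measure.restrict_singleton]
    exact ⟨by simp, (finite_singleton a).subset fun t ht => by simpa using ht.1⟩
  have huIcc := uIcc_of_le hab.le
  obtain ⟨M, hM, hMa, hMγ, hle⟩ := hopt.exists_momentum hab
  have hcont (i : Fin 3) : ContinuousOn (M · i) (Icc a b) := huIcc ▸ (hM i).1.continuousOn
  have hk : ContinuousOn (fun t => sin α * M t 0) (Icc a b) := (hcont 0).const_mul (sin α)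
  have hmax := hopt.1.isControl.ae_mul_eq_abs hab.le hk hle
  have hfin : {t ∈ Icc a b | sin α * M t 0 = 0}.Finite := by
    simp only [mul_eq_zero, hα, false_or]
    refine finite_setOf_eq_zero_of_hasDerivWithinAt isCompact_Icc (fun t ht =>
      hM.axis_apply_zero.hasDerivWithinAt ((hcont 1).const_mul (cos α)).neg ht) fun t ht hMt => ?_
    exact neg_ne_zero.2 <| hM.cos_mul_apply_one_ne_zero (huIcc ▸ hmax) hMa
      (hopt.1.dotProduct_self (left_mem_Icc.2 hab.le)) hMγ haxis (huIcc ▸ ht) hMt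
  exact ⟨ae_abs_eq_one_of_mul_eq_abs hmax hfin,
    hfin.subset fun t ht => ⟨ht.1, eq_zero_of_isSwitching hk hmax ht⟩⟩

/-- Every time optimal trajectory of `(Σ)_S` starting at the north pole is regular
bang-bang. -/
theorem regular_bang_bang (α a b : ℝ) (γ : ℝ → Fin 3 → ℝ) (u : ℝ → ℝ)
    (hα : α ∈ Set.Ioo 0 (π / 4)) (hopt : TimeOptimalS α a b γ u)
    (h0 : γ a = ![0, 0, 1]) :
    (∀ᵐ t ∂(volume.restrict (Set.Icc a b)), |u t| = 1) ∧
    {t | IsSwitching a b u t}.Finite := by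
  have hsin : 0 < sin α := sin_pos_of_pos_of_lt_pi hα.1 (by linarith [hα.2, pi_pos])
  have hlt : sin α < cos α := by
    rw [← sin_pi_div_two_sub]
    apply sin_lt_sin_of_lt_of_le_pi_div_two <;> linarith [hα.1, hα.2, pi_pos]
  refine regular_bang_bang_general hsin.ne' hopt fun v _ => ?_
  simpa [h0, axis, abs_of_pos hsin, abs_of_pos (hsin.trans hlt)] using hlt
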